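/- Let f ∈ Hol(α) be a bounded α-Hölder potential and ν its conformal measure with eigenvalue λ > 0. Then for every x ∈ X the limit h(x) = lim_{n→∞} L_f^n 1(x) / ∫_X L_f^n 1 dν exists; the function h is bounded away from 0 and from ∞ (there exist 0 < c ≤ C < ∞ with c ≤ h(x) ≤ C for all x), h belongs to Hol(α), and L_f h = λh. Moreover, h is the unique α-Hölder function with this property up to multiplication by a scalar: any h' ∈ Hol(α) with L_f h' = λh' is a scalar multiple of h. -/

import Mathlib

open MeasureTheory Filter Topology BoundedContinuousFunction

noncomputable section

variable {E : Type*} [MetricSpace E]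

/-- The metric on the sequence space `X = E^ℕ`:
`d_X(x,y) = ∑_{n=1}^∞ 2⁻ⁿ · min(d_E(x_n,y_n), 1)`. -/
def dX (x y : ℕ → E) : ℝ :=
  ∑' n : ℕ, ((1 : ℝ) / 2) ^ (n + 1) * min (dist (x n) (y n)) 1

/-- The left shift `σ(x₁,x₂,x₃,…) = (x₂,x₃,…)`. -/
def shift (x : ℕ → E) : ℕ → E := fun n => x (n + 1)

theorem continuous_shift : Continuous (shift (E := E)) :=
  continuous_pi fun n => continuous_apply (n + 1)

/-- Prepending one symbol: `ax = (a, x₁, x₂, …)`. -/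
def cons (a : E) (x : ℕ → E) : ℕ → E := fun n => Nat.casesOn n a x

/-- Prepending a finite word `a = (a₁,…,a_n)`. -/
def prepend {n : ℕ} (a : Fin n → E) (x : ℕ → E) : ℕ → E :=
  fun k => if h : k < n then a ⟨k, h⟩ else x (k - n)

/-- Birkhoff sums `f_n = ∑_{k=0}^{n-1} f ∘ σᵏ`. -/
def birkhoff (f : (ℕ → E) → ℝ) (n : ℕ) (x : ℕ → E) : ℝ :=
  ∑ k ∈ Finset.range n, f (shift^[k] x)

/-- Boundedness of a real-valued function on `X`. -/
def Bdd (g : (ℕ → E) → ℝ) : Prop := ∃ M : ℝ, ∀ x, |g x| ≤ M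

/-- `g` is `α`-Hölder with constant `C` (w.r.t. the metric `dX`). -/
def HolderConst (α C : ℝ) (g : (ℕ → E) → ℝ) : Prop :=
  ∀ x y, |g x - g y| ≤ C * dX x y ^ α

/-- `g ∈ Hol(α)`: bounded, continuous and `α`-Hölder. -/
def MemHol (α : ℝ) (g : (ℕ → E) → ℝ) : Prop :=
  Continuous g ∧ Bdd g ∧ ∃ C : ℝ, HolderConst α C g

/-- `g ∈ C_b(X,ℝ)`: bounded and continuous. -/
def MemCb (g : (ℕ → E) → ℝ) : Prop := Continuous g ∧ Bdd g

/-- The Hölder seminorm `D_α(g) = sup_{x ≠ y} |g x - g y| / d_X(x,y)^α`. -/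
def Dalpha (α : ℝ) (g : (ℕ → E) → ℝ) : ℝ :=
  sSup {r : ℝ | ∃ x y : ℕ → E, x ≠ y ∧ r = |g x - g y| / dX x y ^ α}

/-- The supremum norm `‖g‖_∞`. -/
def supNorm (g : (ℕ → E) → ℝ) : ℝ := ⨆ x : ℕ → E, |g x|

/-- The Hölder norm `‖g‖_α = ‖g‖_∞ + D_α(g)`. -/
def alphaNorm (α : ℝ) (g : (ℕ → E) → ℝ) : ℝ := supNorm g + Dalpha α g

variable [MeasurableSpace E] [BorelSpace E]

/-- The Ruelle transfer operator `L_f φ(x) = ∫_E e^{f(ax)} φ(ax) dp(a)`. -/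
def ruelle (p : Measure E) (f φ : (ℕ → E) → ℝ) : (ℕ → E) → ℝ :=
  fun x => ∫ a, Real.exp (f (cons a x)) * φ (cons a x) ∂p

/-- The normalized operators `P^m_n(φ) = L_f^m(φ · L_f^n 1) / L_f^{m+n} 1`. -/
def Pmn (p : Measure E) (f : (ℕ → E) → ℝ) (m n : ℕ) (φ : (ℕ → E) → ℝ) : (ℕ → E) → ℝ :=
  fun x => (ruelle p f)^[m] (fun y => φ y * (ruelle p f)^[n] (fun _ => 1) y) x /
    (ruelle p f)^[m + n] (fun _ => 1) x

/-- The equivalent bounded metric `d̄(x,y) = min{1, 4 C_f d_X(x,y)^α}`. -/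
def dbar (Cf α : ℝ) (x y : ℕ → E) : ℝ := min 1 (4 * Cf * dX x y ^ α)

/-- The Wasserstein distance associated to `d̄`, via Kantorovich duality. -/
def wass (Cf α : ℝ) (μ₁ μ₂ : Measure (ℕ → E)) : ℝ :=
  sSup {r : ℝ | ∃ g : (ℕ → E) → ℝ,
    (∀ x y, |g x - g y| ≤ dbar Cf α x y) ∧ r = (∫ x, g x ∂μ₁) - ∫ x, g x ∂μ₂}

section Aux

set_option linter.unusedSectionVars false

theorem aux_summable (x y : ℕ → E) :
    Summable (fun n : ℕ => ((1 : ℝ) / 2) ^ (n + 1) * min (dist (x n) (y n)) 1) := by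
  refine Summable.of_nonneg_of_le (fun n => by positivity) (fun n => ?_)
    ((summable_geometric_of_lt_one (r := (1 : ℝ) / 2) (by norm_num) (by norm_num)))
  have h1 : min (dist (x n) (y n)) 1 ≤ 1 := min_le_right _ _
  have h2 : (0 : ℝ) ≤ ((1 : ℝ) / 2) ^ n := by positivity
  rw [pow_succ]
  nlinarith

theorem aux_dX_nonneg (x y : ℕ → E) : 0 ≤ dX x y :=
  tsum_nonneg fun n => by positivity

theorem aux_dX_le_one (x y : ℕ → E) : dX x y ≤ 1 := by
  have hg := hasSum_geometric_two' (1 : ℝ)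
  refine hg.tsum_eq ▸ (aux_summable x y).tsum_le_tsum (fun n => ?_) hg.summable
  have h1 : min (dist (x n) (y n)) 1 ≤ 1 := min_le_right _ _
  have h2 : (0 : ℝ) ≤ ((1 : ℝ) / 2) ^ (n + 1) := by positivity
  have h3 : (1 : ℝ) / 2 / 2 ^ n = ((1 : ℝ) / 2) ^ (n + 1) := by
    rw [pow_succ, one_div_pow]; ring
  rw [h3]
  nlinarith

theorem aux_dX_comm (x y : ℕ → E) : dX x y = dX y x := by
  simp only [dX, dist_comm]

theorem aux_dX_cons (a : E) (x y : ℕ → E) : dX (cons a x) (cons a y) = dX x y / 2 := by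
  unfold dX
  rw [(aux_summable (cons a x) (cons a y)).tsum_eq_zero_add, ← tsum_div_const]
  have h0 : min (dist (cons a x 0) (cons a y 0)) 1 = 0 := by
    change min (dist a a) 1 = 0
    simp
  rw [h0, mul_zero, zero_add]
  refine tsum_congr fun n => ?_
  change _ * min (dist (x n) (y n)) 1 = _
  ring

theorem aux_rpow_cons {α : ℝ} (a : E) (x y : ℕ → E) :
    dX (cons a x) (cons a y) ^ α = (1 / 2 : ℝ) ^ α * dX x y ^ α := by
  rw [aux_dX_cons, ← Real.mul_rpow (by norm_num) (aux_dX_nonneg x y)]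
  congr 1; ring

theorem aux_continuous_cons : Continuous (fun q : E × (ℕ → E) => cons q.1 q.2) := by
  refine continuous_pi fun n => ?_
  cases n with
  | zero => exact continuous_fst
  | succ n => exact (continuous_apply n).comp continuous_snd

theorem aux_cons_left (x : ℕ → E) : Continuous (fun a : E => cons a x) :=
  aux_continuous_cons.comp (continuous_id.prodMk continuous_const)

theorem aux_cons_right (a : E) : Continuous (fun x : ℕ → E => cons a x) :=
  aux_continuous_cons.comp (continuous_const.prodMk continuous_id)

/-- The cone of nonnegative log-Hölder functions. -/
def InCone (α B : ℝ) (φ : (ℕ → E) → ℝ) : Prop :=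
  Continuous φ ∧ (∀ x, 0 ≤ φ x) ∧ ∀ x y, φ x ≤ Real.exp (B * dX x y ^ α) * φ y

theorem aux_t_nonneg (α : ℝ) (x y : ℕ → E) : 0 ≤ dX x y ^ α :=
  Real.rpow_nonneg (aux_dX_nonneg x y) α

theorem aux_t_le_one {α : ℝ} (hα : 0 < α) (x y : ℕ → E) : dX x y ^ α ≤ 1 :=
  Real.rpow_le_one (aux_dX_nonneg x y) (aux_dX_le_one x y) hα.le

theorem InCone.le_exp {α B : ℝ} (hα : 0 < α) (hB : 0 ≤ B) {φ : (ℕ → E) → ℝ}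
    (h : InCone α B φ) (x y : ℕ → E) : φ x ≤ Real.exp B * φ y := by
  refine (h.2.2 x y).trans (mul_le_mul_of_nonneg_right (Real.exp_le_exp.2 ?_) (h.2.1 y))
  have := aux_t_le_one hα x y
  nlinarith

theorem InCone.memCb [Nonempty E] {α B : ℝ} (hα : 0 < α) (hB : 0 ≤ B) {φ : (ℕ → E) → ℝ}
    (h : InCone α B φ) : MemCb φ := by
  obtain ⟨e⟩ := ‹Nonempty E›
  refine ⟨h.1, Real.exp B * φ (fun _ => e), fun x => ?_⟩
  rw [abs_of_nonneg (h.2.1 x)]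
  exact h.le_exp hα hB x _

theorem MemCb.sub_mul {φ ψ : (ℕ → E) → ℝ} (h : MemCb φ) (h' : MemCb ψ) (c : ℝ) :
    MemCb (fun x => φ x - c * ψ x) := by
  obtain ⟨h1, M, hM⟩ := h
  obtain ⟨h2, N, hN⟩ := h'
  refine ⟨h1.sub (continuous_const.mul h2), M + |c| * N, fun x => ?_⟩
  refine (abs_sub _ _).trans (add_le_add (hM x) ?_)
  rw [abs_mul]
  exact mul_le_mul_of_nonneg_left (hN x) (abs_nonneg c)

theorem aux_memCb_const (c : ℝ) : MemCb (fun _ : ℕ → E => c) :=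
  ⟨continuous_const, |c|, fun _ => le_rfl⟩

variable [SecondCountableTopology E] (p : Measure E) [IsProbabilityMeasure p]

theorem aux_integrable_nu {ν : Measure (ℕ → E)} [IsProbabilityMeasure ν] {φ : (ℕ → E) → ℝ}
    (h : MemCb φ) : Integrable φ ν := by
  obtain ⟨h1, M, hM⟩ := h
  exact Integrable.of_bound h1.aestronglyMeasurable M (ae_of_all _ fun x => by simpa using hM x)

theorem MemCb.weight {f φ : (ℕ → E) → ℝ} (hf : MemCb f) (h : MemCb φ) :
    MemCb (fun x => Real.exp (f x) * φ x) := by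
  obtain ⟨h1, M, hM⟩ := hf
  obtain ⟨h2, N, hN⟩ := h
  refine ⟨(Real.continuous_exp.comp h1).mul h2, Real.exp M * N, fun x => ?_⟩
  rw [abs_mul, Real.abs_exp]
  exact mul_le_mul (Real.exp_le_exp.2 ((le_abs_self _).trans (hM x))) (hN x) (abs_nonneg _)
    (Real.exp_pos _).le

theorem aux_integrable_p {φ : (ℕ → E) → ℝ} (h : MemCb φ) (x : ℕ → E) :
    Integrable (fun a => φ (cons a x)) p := by
  obtain ⟨h1, M, hM⟩ := h
  exact Integrable.of_bound (h1.comp (aux_cons_left x)).aestronglyMeasurable M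
    (ae_of_all _ fun a => by simpa using hM (cons a x))

theorem MemCb.ruelle {f φ : (ℕ → E) → ℝ} (hf : MemCb f) (h : MemCb φ) :
    MemCb (ruelle p f φ) := by
  obtain ⟨h1, M, hM⟩ := hf.weight h
  refine ⟨?_, M, fun x => ?_⟩
  · refine continuous_of_dominated (bound := fun _ => M)
      (fun x => (h1.comp (aux_cons_left x)).aestronglyMeasurable)
      (fun x => ae_of_all _ fun a => hM (cons a x)) (integrable_const _)
      (ae_of_all _ fun a => h1.comp (aux_cons_right a))
  · have := norm_integral_le_of_norm_le_const (μ := p)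
      (f := fun a => Real.exp (f (cons a x)) * φ (cons a x))
      (ae_of_all _ fun a => hM (cons a x))
    simpa [_root_.ruelle] using this

theorem MemCb.ruelle_iter {f φ : (ℕ → E) → ℝ} (hf : MemCb f) (h : MemCb φ) (n : ℕ) :
    MemCb ((_root_.ruelle p f)^[n] φ) := by
  induction n with
  | zero => exact h
  | succ n ih => rw [Function.iterate_succ_apply']; exact hf.ruelle p ih

theorem aux_ruelle_sub {f φ ψ : (ℕ → E) → ℝ} (hf : MemCb f) (h : MemCb φ) (h' : MemCb ψ) (c : ℝ) :
    ruelle p f (fun x => φ x - c * ψ x) = fun x => ruelle p f φ x - c * ruelle p f ψ x := by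
  funext x
  simp only [ruelle]
  rw [← integral_const_mul, ← integral_sub (aux_integrable_p p (hf.weight h) x)
    ((aux_integrable_p p (hf.weight h') x).const_mul c)]
  refine integral_congr_ae (ae_of_all _ fun a => ?_)
  simp only
  ring

theorem aux_ruelle_iter_sub {f φ ψ : (ℕ → E) → ℝ} (hf : MemCb f) (h : MemCb φ) (h' : MemCb ψ)
    (c : ℝ) (n : ℕ) :
    (ruelle p f)^[n] (fun x => φ x - c * ψ x) =
      fun x => (ruelle p f)^[n] φ x - c * (ruelle p f)^[n] ψ x := by
  induction n with
  | zero => rfl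
  | succ n ih =>
    simp only [Function.iterate_succ_apply']
    rw [ih, aux_ruelle_sub p hf (hf.ruelle_iter p h n) (hf.ruelle_iter p h' n)]

theorem aux_ruelle_smul (f φ : (ℕ → E) → ℝ) (c : ℝ) :
    ruelle p f (fun x => c * φ x) = fun x => c * ruelle p f φ x := by
  funext x
  simp only [ruelle]
  rw [← integral_const_mul]
  refine integral_congr_ae (ae_of_all _ fun a => ?_)
  simp only
  ring

theorem aux_ruelle_iter_smul (f φ : (ℕ → E) → ℝ) (c : ℝ) (n : ℕ) :
    (ruelle p f)^[n] (fun x => c * φ x) = fun x => c * (ruelle p f)^[n] φ x := by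
  induction n with
  | zero => rfl
  | succ n ih =>
    simp only [Function.iterate_succ_apply']
    rw [ih, aux_ruelle_smul]

theorem InCone.ruelle [Nonempty E] {α B C : ℝ} (hα : 0 < α) (hB : 0 ≤ B)
    {f φ : (ℕ → E) → ℝ} (hf : MemCb f) (hC : HolderConst α C f) (h : InCone α B φ) :
    InCone α ((1 / 2 : ℝ) ^ α * (B + C)) (ruelle p f φ) := by
  have hφ := h.memCb hα hB
  refine ⟨(hf.ruelle p hφ).1, fun x => integral_nonneg fun a =>
    mul_nonneg (Real.exp_pos _).le (h.2.1 _), fun x y => ?_⟩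
  simp only [_root_.ruelle]
  rw [← integral_const_mul]
  refine integral_mono (aux_integrable_p p (hf.weight hφ) x)
    ((aux_integrable_p p (hf.weight hφ) y).const_mul _) fun a => ?_
  have h1 := hC (cons a x) (cons a y)
  have h2 := h.2.2 (cons a x) (cons a y)
  rw [aux_rpow_cons] at h1 h2
  have h3 : f (cons a x) ≤ f (cons a y) + C * ((1 / 2 : ℝ) ^ α * dX x y ^ α) := by
    linarith [le_abs_self (f (cons a x) - f (cons a y))]
  calc Real.exp (f (cons a x)) * φ (cons a x)
      ≤ Real.exp (f (cons a y) + C * ((1 / 2 : ℝ) ^ α * dX x y ^ α)) *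
        (Real.exp (B * ((1 / 2 : ℝ) ^ α * dX x y ^ α)) * φ (cons a y)) :=
        mul_le_mul (Real.exp_le_exp.2 h3) h2 (h.2.1 _) (Real.exp_pos _).le
    _ = _ := by
        have e : Real.exp (f (cons a y) + C * ((1 / 2 : ℝ) ^ α * dX x y ^ α)) *
            Real.exp (B * ((1 / 2 : ℝ) ^ α * dX x y ^ α)) =
            Real.exp ((1 / 2 : ℝ) ^ α * (B + C) * dX x y ^ α) * Real.exp (f (cons a y)) := by
          rw [← Real.exp_add, ← Real.exp_add]
          congr 1
          ring
        rw [← mul_assoc, e, mul_assoc]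

theorem InCone.mono {α B B' : ℝ} (hBB : B ≤ B') {φ : (ℕ → E) → ℝ} (h : InCone α B φ) :
    InCone α B' φ := by
  refine ⟨h.1, h.2.1, fun x y => (h.2.2 x y).trans
    (mul_le_mul_of_nonneg_right (Real.exp_le_exp.2 ?_) (h.2.1 y))⟩
  exact mul_le_mul_of_nonneg_right hBB (aux_t_nonneg α x y)

theorem InCone.integral_bounds [Nonempty E] {α B : ℝ} (hα : 0 < α) (hB : 0 ≤ B)
    {φ : (ℕ → E) → ℝ} (h : InCone α B φ) (ν : Measure (ℕ → E)) [IsProbabilityMeasure ν]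
    (y : ℕ → E) :
    Real.exp (-B) * ∫ x, φ x ∂ν ≤ φ y ∧ φ y ≤ Real.exp B * ∫ x, φ x ∂ν := by
  have hi : Integrable φ ν := aux_integrable_nu (h.memCb hα hB)
  constructor
  · have : ∫ x, φ x ∂ν ≤ ∫ _, Real.exp B * φ y ∂ν :=
      integral_mono hi (integrable_const _) fun x => h.le_exp hα hB x y
    rw [integral_const, probReal_univ, one_smul] at this
    calc _ ≤ Real.exp (-B) * (Real.exp B * φ y) := 
            mul_le_mul_of_nonneg_left this (Real.exp_pos _).le
      _ = φ y := by rw [← mul_assoc, ← Real.exp_add]; simp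
  · have : ∫ _, φ y ∂ν ≤ ∫ x, Real.exp B * φ x ∂ν :=
      integral_mono (integrable_const _) (hi.const_mul _) fun x => h.le_exp hα hB y x
    rwa [integral_const, probReal_univ, one_smul, integral_const_mul] at this

/-- Subtracting a constant from an element of the smaller cone. -/
theorem InCone.sub_const [Nonempty E] {α B B' : ℝ} (hα : 0 < α) (hB : 1 ≤ B) (hBB : B' + 1 = B)
    {φ : (ℕ → E) → ℝ} (h : InCone α B' φ) (hB' : 0 ≤ B')
    (ν : Measure (ℕ → E)) [IsProbabilityMeasure ν] :
    InCone α B (fun x => φ x - Real.exp (-(2 * B)) / B * ∫ x, φ x ∂ν) := by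
  have hb := fun y => (h.mono (by linarith : B' ≤ B)).integral_bounds hα (by linarith) ν y
  have hI : 0 ≤ ∫ x, φ x ∂ν := integral_nonneg h.2.1
  set I := ∫ x, φ x ∂ν
  have e1 : Real.exp (-(2 * B)) = Real.exp (-B) * Real.exp (-B) := by
    rw [← Real.exp_add]; ring_nf
  have e2 : Real.exp (-B) * Real.exp B = 1 := by rw [← Real.exp_add]; simp
  have e0 := Real.exp_pos (-B)
  have e3 : Real.exp (-B) ≤ 1 := Real.exp_le_one_iff.2 (by linarith)
  have hB0 : 0 < B := by linarith
  set η := Real.exp (-(2 * B)) / B with hη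
  have hη0 : 0 ≤ η := by positivity
  have hηB : η * B = Real.exp (-B) * Real.exp (-B) := by rw [hη, e1]; field_simp
  have hη1 : η ≤ Real.exp (-B) := by nlinarith
  refine ⟨h.1.sub continuous_const, fun x => ?_, fun x y => ?_⟩
  · have := (hb x).1
    nlinarith
  · set t := dX x y ^ α with ht
    have ht0 : 0 ≤ t := aux_t_nonneg α x y
    have ht1 : t ≤ 1 := aux_t_le_one hα x y
    have h1 : φ x ≤ Real.exp (B' * t) * φ y := h.2.2 x y
    -- `exp (B t) - 1 ≤ B t exp B`
    have k1 : Real.exp (B * t) - 1 ≤ B * t * Real.exp B := by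
      have : 1 - B * t ≤ Real.exp (-(B * t)) := by linarith [Real.add_one_le_exp (-(B * t))]
      have h5 : Real.exp (-(B * t)) * Real.exp (B * t) = 1 := by rw [← Real.exp_add]; simp
      have h6 : Real.exp (B * t) ≤ Real.exp B := Real.exp_le_exp.2 (by nlinarith)
      have h7 := mul_le_mul_of_nonneg_right this (Real.exp_pos (B * t)).le
      have h8 := mul_le_mul_of_nonneg_left h6 (mul_nonneg hB0.le ht0)
      nlinarith
    have k2 : t ≤ Real.exp (B * t) - Real.exp (B' * t) := by
      have : Real.exp (B * t) = Real.exp (B' * t) * Real.exp t := by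
        rw [← Real.exp_add, ← hBB]; ring_nf
      have h5 : t + 1 ≤ Real.exp t := Real.add_one_le_exp t
      have h6 : 1 ≤ Real.exp (B' * t) := Real.one_le_exp (by positivity)
      rw [this]
      nlinarith
    have k3 : η * I * (Real.exp (B * t) - 1) ≤ t * (Real.exp (-B) * I) := by
      calc η * I * (Real.exp (B * t) - 1) ≤ η * I * (B * t * Real.exp B) :=
            mul_le_mul_of_nonneg_left k1 (by positivity)
        _ = (η * B) * Real.exp B * t * I := by ring
        _ = t * (Real.exp (-B) * I) := by
            rw [hηB, mul_assoc (Real.exp (-B)), e2]; ring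
    have k4 : t * (Real.exp (-B) * I) ≤ (Real.exp (B * t) - Real.exp (B' * t)) * φ y :=
      mul_le_mul k2 (hb y).1 (by positivity) (ht0.trans k2)
    simp only
    nlinarith

/-- Contraction of the iterates. -/
theorem aux_contract [Nonempty E] {α B C lam : ℝ} (hα : 0 < α) (hB : 1 ≤ B)
    (hBB : (1 / 2 : ℝ) ^ α * (B + C) + 1 = B) (hC0 : 0 ≤ C)
    {f : (ℕ → E) → ℝ} (hf : MemCb f) (hC : HolderConst α C f)
    (ν : Measure (ℕ → E)) [IsProbabilityMeasure ν]
    (hconf : ∀ φ : (ℕ → E) → ℝ, MemCb φ →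
      (∫ x, ruelle p f φ x ∂ν) = lam * ∫ x, φ x ∂ν) (n : ℕ) :
    ∀ (I : ℝ) (φ ψ : (ℕ → E) → ℝ), InCone α B φ → InCone α B ψ → ∫ x, φ x ∂ν = I →
      ∫ x, ψ x ∂ν = I → ∀ x, |(ruelle p f)^[n] φ x - (ruelle p f)^[n] ψ x| ≤
        (lam * (1 - Real.exp (-(2 * B)) / B)) ^ n * (Real.exp B * I) := by
  have hB0 : 0 ≤ B := by linarith
  have hB' : 0 ≤ (1 / 2 : ℝ) ^ α * (B + C) := by positivity
  induction n with
  | zero =>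
    intro I φ ψ h1 h2 i1 i2 x
    have a1 := (h1.integral_bounds hα hB0 ν x).2
    have a2 := (h2.integral_bounds hα hB0 ν x).2
    have := h1.2.1 x
    have := h2.2.1 x
    rw [i1] at a1
    rw [i2] at a2
    simp only [Function.iterate_zero, id_eq, pow_zero, one_mul]
    rw [abs_le]
    constructor <;> linarith
  | succ n ih =>
    intro I φ ψ h1 h2 i1 i2 x
    set η := Real.exp (-(2 * B)) / B with hη
    have step : ∀ χ : (ℕ → E) → ℝ, InCone α B χ → ∫ x, χ x ∂ν = I →
        InCone α B (fun x => ruelle p f χ x - η * (lam * I)) ∧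
        ∫ x, (ruelle p f χ x - η * (lam * I)) ∂ν = lam * (1 - η) * I ∧
        (ruelle p f)^[n] (fun x => ruelle p f χ x - η * (lam * I)) x =
          (ruelle p f)^[n] (ruelle p f χ) x - η * (lam * I) * (ruelle p f)^[n] (fun _ => 1) x := by
      intro χ h i
      have hm := h.memCb hα hB0
      have hr := (h.ruelle p hα hB0 hf hC)
      have hi : ∫ x, ruelle p f χ x ∂ν = lam * I := by rw [hconf χ hm, i]
      refine ⟨?_, ?_, ?_⟩
      · have := hr.sub_const hα hB hBB hB' ν
        rwa [hi] at this
      · rw [integral_sub (aux_integrable_nu (hf.ruelle p hm)) (integrable_const _), hi,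
          integral_const, probReal_univ, one_smul]
        ring
      · have := aux_ruelle_iter_sub p hf (hf.ruelle p hm) (aux_memCb_const 1) (η * (lam * I)) n
        simp only [mul_one] at this
        rw [this]
    obtain ⟨c1, d1, e1⟩ := step φ h1 i1
    obtain ⟨c2, d2, e2⟩ := step ψ h2 i2
    have := ih _ _ _ c1 c2 d1 d2 x
    rw [e1, e2, sub_sub_sub_cancel_right] at this
    rw [Function.iterate_succ_apply, Function.iterate_succ_apply]
    refine this.trans (le_of_eq ?_)
    ring

end Aux

/-- Existence of the eigenfunction `h` as the limit of
`L_f^n 1 / ∫ L_f^n 1 dν`: it is bounded away from `0` and `∞`, belongs to `Hol(α)`,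
satisfies `L_f h = λ h`, and is the unique Hölder eigenfunction up to a scalar. -/
theorem statement7 {E : Type*} [MetricSpace E] [CompleteSpace E]
    [TopologicalSpace.SeparableSpace E] [MeasurableSpace E] [BorelSpace E] [Nonempty E]
    (p : Measure E) [IsProbabilityMeasure p]
    (α : ℝ) (hα0 : 0 < α) (hα1 : α < 1)
    (f : (ℕ → E) → ℝ) (hf : MemHol α f)
    (ν : Measure (ℕ → E)) (hν : IsProbabilityMeasure ν) (lam : ℝ) (hlam : 0 < lam)
    (hlam_eq : lam = ∫ x, ruelle p f (fun _ => 1) x ∂ν)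
    (hconf : ∀ φ : (ℕ → E) → ℝ, MemCb φ →
      (∫ x, ruelle p f φ x ∂ν) = lam * ∫ x, φ x ∂ν) :
    ∃ h : (ℕ → E) → ℝ,
      (∀ x : ℕ → E, Tendsto (fun n : ℕ =>
          (ruelle p f)^[n] (fun _ => 1) x / ∫ y, (ruelle p f)^[n] (fun _ => 1) y ∂ν)
        atTop (nhds (h x))) ∧
      (∃ c C : ℝ, 0 < c ∧ c ≤ C ∧ ∀ x, c ≤ h x ∧ h x ≤ C) ∧
      MemHol α h ∧
      (∀ x, ruelle p f h x = lam * h x) ∧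
      ∀ h' : (ℕ → E) → ℝ, MemHol α h' → (∀ x, ruelle p f h' x = lam * h' x) →
        ∃ c : ℝ, h' = fun x => c * h x := by
  obtain ⟨hfc, hfb, C₀, hC₀⟩ := hf
  have hfm : MemCb f := ⟨hfc, hfb⟩
  have : SecondCountableTopology E := UniformSpace.secondCountable_of_separable E
  have := hν
  obtain ⟨C, hC0, hC⟩ : ∃ C : ℝ, 0 ≤ C ∧ HolderConst α C f :=
    ⟨|C₀|, abs_nonneg _, fun x y => (hC₀ x y).trans
      (mul_le_mul_of_nonneg_right (le_abs_self _) (aux_t_nonneg α x y))⟩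
  set θ := (1 / 2 : ℝ) ^ α with hθ
  have hθ0 : 0 < θ := by positivity
  have hθ1 : θ < 1 := Real.rpow_lt_one (by norm_num) (by norm_num) hα0
  obtain ⟨B, hBdef⟩ : ∃ B : ℝ, B = (θ * C + 1) / (1 - θ) := ⟨_, rfl⟩
  have hB1 : B * (1 - θ) = θ * C + 1 := by
    rw [hBdef]; field_simp [(by linarith : (1 - θ) ≠ 0)]
  have hBB : θ * (B + C) + 1 = B := by linarith
  have hB : 1 ≤ B := by
    rw [hBdef, le_div_iff₀ (by linarith)]; nlinarith [mul_nonneg hθ0.le hC0]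
  have hB0 : 0 ≤ B := by linarith
  have contract := aux_contract p hα0 hB hBB hC0 hfm hC ν hconf
  set η := Real.exp (-(2 * B)) / B with hη
  have hη0 : 0 < η := by positivity
  have hη1 : η < 1 := by
    rw [hη, div_lt_one (by linarith)]
    exact lt_of_lt_of_le (by rw [← Real.exp_zero]; exact Real.exp_lt_exp.2 (by linarith)) hB
  have oneCone : ∀ c : ℝ, 0 ≤ c → InCone α B (fun _ : ℕ → E => c) := fun c hc =>
    ⟨continuous_const, fun _ => hc, fun x y => le_mul_of_one_le_left hc
      (Real.one_le_exp (mul_nonneg hB0 (aux_t_nonneg α x y)))⟩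
  have stepCone : ∀ φ : (ℕ → E) → ℝ, InCone α B φ → InCone α B (ruelle p f φ) := fun φ h =>
    (h.ruelle p hα0 hB0 hfm hC).mono (by linarith)
  have iterCone : ∀ n, InCone α B ((ruelle p f)^[n] (fun _ => 1)) := by
    intro n
    induction n with
    | zero => exact oneCone 1 zero_le_one
    | succ n ih => rw [Function.iterate_succ_apply']; exact stepCone _ ih
  have iterInt : ∀ n, ∫ y, (ruelle p f)^[n] (fun _ => 1) y ∂ν = lam ^ n := by
    intro n
    induction n with
    | zero => simp
    | succ n ih =>
      simp only [Function.iterate_succ_apply']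
      rw [hconf _ ((iterCone n).memCb hα0 hB0), ih]; ring
  obtain ⟨u, hu⟩ : ∃ u : ℕ → (ℕ → E) → ℝ,
      ∀ n x, u n x = (ruelle p f)^[n] (fun _ => 1) x / lam ^ n := ⟨_, fun _ _ => rfl⟩
  have hdist : ∀ x n, dist (u n x) (u (n + 1) x) ≤ Real.exp B * (1 - η) ^ n := by
    intro x n
    have hr : ∫ y, ruelle p f (fun _ => 1) y ∂ν = lam := hlam_eq.symm
    have := contract n lam (ruelle p f (fun _ => 1)) (fun _ => lam)
      (stepCone _ (oneCone 1 zero_le_one)) (oneCone lam hlam.le) hr (by simp) x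
    have e := aux_ruelle_iter_smul p f (fun _ => 1) lam n
    simp only [mul_one] at e
    rw [e, ← Function.iterate_succ_apply] at this
    rw [hu, hu, dist_comm, Real.dist_eq]
    have hp : 0 < lam ^ (n + 1) := by positivity
    have e2 : (ruelle p f)^[n + 1] (fun _ => 1) x / lam ^ (n + 1) -
        (ruelle p f)^[n] (fun _ => 1) x / lam ^ n =
        ((ruelle p f)^[n + 1] (fun _ => 1) x - lam * (ruelle p f)^[n] (fun _ => 1) x) /
          lam ^ (n + 1) := by
      field_simp
      ring
    rw [e2, abs_div, abs_of_pos hp, div_le_iff₀ hp]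
    refine this.trans (le_of_eq ?_)
    rw [mul_pow]; ring
  have hr1 : 1 - η < 1 := by linarith
  have hlim : ∀ x, ∃ l, Tendsto (fun n => u n x) atTop (nhds l) := fun x =>
    cauchySeq_tendsto_of_complete (cauchySeq_of_le_geometric (1 - η) (Real.exp B) hr1 (hdist x))
  choose h hh using hlim
  have uCone : ∀ n, InCone α B (u n) := by
    intro n
    have e : u n = fun x => (ruelle p f)^[n] (fun _ => 1) x / lam ^ n := funext (hu n)
    obtain ⟨a, b, c⟩ := iterCone n
    have hp : 0 < lam ^ n := by positivity
    rw [e]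
    refine ⟨a.div_const _, fun x => div_nonneg (b x) hp.le, fun x y => ?_⟩
    rw [← mul_div_assoc]
    exact div_le_div_of_nonneg_right (c x y) hp.le
  have uInt : ∀ n, ∫ x, u n x ∂ν = 1 := by
    intro n
    simp only [hu]
    rw [integral_div, iterInt, div_self (by positivity)]
  have uB : ∀ n x, Real.exp (-B) ≤ u n x ∧ u n x ≤ Real.exp B := by
    intro n x
    have := (uCone n).integral_bounds hα0 hB0 ν x
    rwa [uInt, mul_one, mul_one] at this
  have hB' : ∀ x, Real.exp (-B) ≤ h x ∧ h x ≤ Real.exp B := fun x =>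
    ⟨ge_of_tendsto' (hh x) fun n => (uB n x).1, le_of_tendsto' (hh x) fun n => (uB n x).2⟩
  have hcont : Continuous h := by
    have hU : TendstoUniformly u h atTop := by
      rw [Metric.tendstoUniformly_iff]
      intro ε hε
      have h0 : Tendsto (fun n : ℕ => Real.exp B * (1 - η) ^ n / (1 - (1 - η))) atTop (nhds 0) := by
        have := ((tendsto_pow_atTop_nhds_zero_of_lt_one (by linarith) hr1).const_mul
          (Real.exp B)).div_const (1 - (1 - η))
        simpa using this
      filter_upwards [h0.eventually (gt_mem_nhds hε)] with n hn x
      rw [dist_comm]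
      exact (dist_le_of_le_geometric_of_tendsto (1 - η) (Real.exp B) hr1 (hdist x) (hh x) n).trans_lt
        hn
    exact hU.continuous (Frequently.of_forall fun n => (uCone n).1)
  have hCone : InCone α B h := by
    refine ⟨hcont, fun x => (Real.exp_pos _).le.trans (hB' x).1, fun x y => ?_⟩
    exact le_of_tendsto_of_tendsto' (hh x) ((hh y).const_mul _) fun n => (uCone n).2.2 x y
  have hHol : HolderConst α (B * Real.exp B * Real.exp B) h := by
    have key : ∀ x y, h x - h y ≤ B * Real.exp B * Real.exp B * dX x y ^ α := by
      intro x y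
      have h1 := hCone.2.2 x y
      have ht0 : 0 ≤ dX x y ^ α := aux_t_nonneg α x y
      have ht1 : dX x y ^ α ≤ 1 := aux_t_le_one hα0 x y
      set t := dX x y ^ α
      have k1 : Real.exp (B * t) - 1 ≤ B * t * Real.exp B := by
        have : 1 - B * t ≤ Real.exp (-(B * t)) := by linarith [Real.add_one_le_exp (-(B * t))]
        have h5 : Real.exp (-(B * t)) * Real.exp (B * t) = 1 := by rw [← Real.exp_add]; simp
        have h6 : Real.exp (B * t) ≤ Real.exp B := Real.exp_le_exp.2 (by nlinarith)
        have h7 := mul_le_mul_of_nonneg_right this (Real.exp_pos (B * t)).le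
        have h8 := mul_le_mul_of_nonneg_left h6 (mul_nonneg hB0 ht0)
        nlinarith
      have k2 : (Real.exp (B * t) - 1) * h y ≤ B * t * Real.exp B * Real.exp B :=
        mul_le_mul k1 (hB' y).2 (hCone.2.1 y) (by positivity)
      linarith
    intro x y
    rw [abs_le]
    have h1 := key x y
    have h2 := key y x
    rw [aux_dX_comm] at h2
    constructor <;> linarith
  have hCb := hCone.memCb hα0 hB0
  have hEig : ∀ x, ruelle p f h x = lam * h x := by
    intro x
    have t1 : Tendsto (fun n => ruelle p f (u n) x) atTop (nhds (ruelle p f h x)) := by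
      refine tendsto_integral_of_dominated_convergence
        (fun a => Real.exp (f (cons a x)) * Real.exp B) (fun n => ?_) ?_ (fun n => ?_) ?_
      · exact (aux_integrable_p p (hfm.weight ((uCone n).memCb hα0 hB0)) x).aestronglyMeasurable
      · exact aux_integrable_p p (hfm.weight (aux_memCb_const (Real.exp B))) x
      · refine ae_of_all _ fun a => ?_
        rw [norm_mul, Real.norm_eq_abs, Real.abs_exp, Real.norm_eq_abs,
          abs_of_nonneg ((uCone n).2.1 _)]
        exact mul_le_mul_of_nonneg_left (uB n _).2 (Real.exp_pos _).le
      · exact ae_of_all _ fun a => (hh (cons a x)).const_mul _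
    have t2 : Tendsto (fun n => lam * u (n + 1) x) atTop (nhds (lam * h x)) :=
      ((hh x).comp (tendsto_add_atTop_nat 1)).const_mul lam
    have e : ∀ n, ruelle p f (u n) x = lam * u (n + 1) x := by
      intro n
      have e1 : u n = fun x => (lam ^ n)⁻¹ * (ruelle p f)^[n] (fun _ => 1) x := by
        funext z; rw [hu, div_eq_inv_mul]
      rw [e1, aux_ruelle_smul, hu, Function.iterate_succ_apply']
      field_simp
      ring
    simp only [e] at t1
    exact tendsto_nhds_unique t1 t2
  refine ⟨h, ?_, ⟨Real.exp (-B), Real.exp B, Real.exp_pos _, Real.exp_le_exp.2 (by linarith), hB'⟩,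
    ⟨hcont, hCb.2, _, hHol⟩, hEig, ?_⟩
  · intro x
    simp only [iterInt, ← hu]
    exact hh x
  · rintro h' ⟨hc', ⟨M, hM⟩, D₀, hD₀⟩ hE'
    have hm' : MemCb h' := ⟨hc', M, hM⟩
    have hDD : ∀ x y, h' x - h' y ≤ |D₀| * dX x y ^ α := fun x y =>
      (le_abs_self _).trans ((hD₀ x y).trans
        (mul_le_mul_of_nonneg_right (le_abs_self _) (aux_t_nonneg α x y)))
    obtain ⟨K, hK⟩ : ∃ K : ℝ, K = M + |D₀| := ⟨_, rfl⟩
    have hge : ∀ x, |D₀| ≤ h' x + K := fun x => by linarith [(abs_le.1 (hM x)).1]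
    have hKm : (fun x => h' x - (-K) * (1 : ℝ)) = fun x => h' x + K := by funext x; ring
    have cone' : InCone α B (fun x => h' x + K) := by
      refine ⟨hc'.add continuous_const, fun x => (abs_nonneg _).trans (hge x), fun x y => ?_⟩
      have ht0 : 0 ≤ dX x y ^ α := aux_t_nonneg α x y
      have h1 := hDD x y
      set t := dX x y ^ α
      have h2 : 1 + t ≤ Real.exp (B * t) := by nlinarith [Real.add_one_le_exp (B * t)]
      have h3 := mul_le_mul_of_nonneg_right h2 ((abs_nonneg _).trans (hge y))
      have h4 := mul_le_mul_of_nonneg_right (hge y) ht0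
      simp only
      linarith
    obtain ⟨I, hI⟩ : ∃ I : ℝ, ∫ x, (h' x + K) ∂ν = I := ⟨_, rfl⟩
    have hI0 : 0 ≤ I := hI ▸ integral_nonneg cone'.2.1
    have hit : ∀ n, (ruelle p f)^[n] h' = fun x => lam ^ n * h' x := by
      intro n
      induction n with
      | zero => simp
      | succ n ih =>
        rw [Function.iterate_succ_apply', ih, aux_ruelle_smul]
        funext x
        rw [hE']; ring
    refine ⟨I - K, funext fun x => ?_⟩
    have hbd : ∀ n, |h' x + K * u n x - I * u n x| ≤ (1 - η) ^ n * (Real.exp B * I) := by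
      intro n
      have := contract n I _ (fun _ => I) cone' (oneCone I hI0) hI (by simp) x
      have e := aux_ruelle_iter_smul p f (fun _ => 1) I n
      simp only [mul_one] at e
      rw [e, ← hKm, aux_ruelle_iter_sub p hfm hm' (aux_memCb_const 1), hit] at this
      simp only at this
      have hp : 0 < lam ^ n := by positivity
      have e3 : lam ^ n * h' x - -K * (ruelle p f)^[n] (fun _ => 1) x -
          I * (ruelle p f)^[n] (fun _ => 1) x = lam ^ n * (h' x + K * u n x - I * u n x) := by
        rw [hu]; field_simp; ring
      rw [e3, abs_mul, abs_of_pos hp, mul_pow, mul_assoc] at this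
      exact le_of_mul_le_mul_left this hp
    have t1 : Tendsto (fun n => |h' x + K * u n x - I * u n x|) atTop
        (nhds |h' x + K * h x - I * h x|) :=
      (((hh x).const_mul K).const_add (h' x)).sub ((hh x).const_mul I) |>.abs
    have t2 : Tendsto (fun n : ℕ => (1 - η) ^ n * (Real.exp B * I)) atTop (nhds 0) := by
      have := (tendsto_pow_atTop_nhds_zero_of_lt_one (by linarith : 0 ≤ 1 - η) hr1).mul_const
        (Real.exp B * I)
      simpa using this
    have := le_of_tendsto_of_tendsto' t1 t2 hbd
    have := abs_eq_zero.1 (le_antisymm this (abs_nonneg _))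
    linarith

end
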